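/- Let n be an odd integer with n ≥ 5, T = {an + b(3n−2) + c(3n−1) : a,b,c ∈ ℕ}, F(T) = n(3n−7)/2 + 2, and S = T ∪ {F(T)}. Then for every integer i ≥ (n+1)/2, no element of Ap(S, F(T)) has exactly i factorizations, i.e. M_i = ∅. -/

import Mathlib

/-- The numerical semigroup `T = ⟨n, 3n-2, 3n-1⟩` as a subset of `ℕ`. -/
def Tset (n : ℕ) : Set ℕ :=
  {s | ∃ a b c : ℕ, s = a * n + b * (3 * n - 2) + c * (3 * n - 1)}

/-- The Frobenius number of `T`, `F(T) = n(3n-7)/2 + 2` (exact division since `n` is odd). -/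
def FT (n : ℕ) : ℕ := n * (3 * n - 7) / 2 + 2

/-- The numerical semigroup `S = T ∪ {F(T)} = ⟨n, 3n-2, 3n-1, F(T)⟩`. -/
def Sset (n : ℕ) : Set ℕ := Tset n ∪ {FT n}

/-- The Apéry set `Ap(S, F(T)) = {s ∈ S | s - F(T) ∉ S}`. -/
def Ap (n : ℕ) : Set ℕ := {s ∈ Sset n | ¬ ∃ t ∈ Sset n, t + FT n = s}

/-- `phi n (x,y,z) = xn + y(3n-2) + z(3n-1)`. -/
def phi (n : ℕ) (p : ℕ × ℕ × ℕ) : ℕ :=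
  p.1 * n + p.2.1 * (3 * n - 2) + p.2.2 * (3 * n - 1)

/-- The set of factorizations of `s` with respect to `(n, 3n-2, 3n-1)`. -/
def Zfac (n s : ℕ) : Set (ℕ × ℕ × ℕ) := {p | phi n p = s}

/-- `p` is the normal form of `s`: a factorization with `z < 2`, `y < (n+1)/2`,
`x < (3n-1)/2`. -/
def IsNF (n s : ℕ) (p : ℕ × ℕ × ℕ) : Prop :=
  p ∈ Zfac n s ∧ p.2.2 < 2 ∧ p.2.1 < (n + 1) / 2 ∧ p.1 < (3 * n - 1) / 2

/-- `M_i`: elements of the Apéry set having exactly `i` factorizations. -/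
def Mset (n i : ℕ) : Set ℕ := {s ∈ Ap n | (Zfac n s).ncard = i}

/-- `nf(M_i)`: normal forms of elements of `M_i`. -/
def nfM (n i : ℕ) : Set (ℕ × ℕ × ℕ) := {p | ∃ s ∈ Mset n i, IsNF n s p}

/-- An L-shape associated with `Ap(S, F(T))`: (C1) `phi` is a bijection from `L` onto the
Apéry set; (C2) `L` is downward closed for the componentwise order. -/
def IsLShape (n : ℕ) (L : Set (ℕ × ℕ × ℕ)) : Prop :=
  Set.BijOn (phi n) L (Ap n) ∧ ∀ u ∈ L, ∀ v : ℕ × ℕ × ℕ, v ≤ u → v ∈ L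

/-- The L-shape `F = F₁ ∪ F₂ ∪ F₃ ∪ F₄` (in `F₃`, `y ≤ (n-7)/2` is stated over the
integers as `2y + 7 ≤ n`, so that `F₃ = ∅` when `n = 5`). -/
def Fset (n : ℕ) : Set (ℕ × ℕ × ℕ) :=
  {p | p.2.2 = 0 ∧ p.1 ≤ (3 * n - 3) / 2 ∧ p.2.1 ≤ (n - 3) / 2} ∪
  {p | p.2.2 = 0 ∧ p.1 ≤ 1 ∧ p.2.1 = (n - 1) / 2} ∪
  {p | p.2.2 = 1 ∧ p.1 ≤ (3 * n - 3) / 2 ∧ 2 * p.2.1 + 7 ≤ n} ∪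
  {p | p.2.2 = 1 ∧ p.1 ≤ (3 * n - 5) / 2 ∧ p.2.1 = (n - 5) / 2}

lemma FT_eq (k : ℕ) : FT (2 * k + 5) = (2 * k + 5) * (3 * k + 4) + 2 := by
  unfold FT
  have h : 3 * (2 * k + 5) - 7 = 2 * (3 * k + 4) := by omega
  rw [h]
  have : (2 * k + 5) * (2 * (3 * k + 4)) = 2 * ((2 * k + 5) * (3 * k + 4)) := by ring
  rw [this, Nat.mul_div_cancel_left _ (by norm_num)]

lemma phi_eq (k x y z : ℕ) :
    x * (2 * k + 5) + y * (3 * (2 * k + 5) - 2) + z * (3 * (2 * k + 5) - 1) + (2 * y + z)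
      = (2 * k + 5) * (x + 3 * y + 3 * z) := by
  have h1 : 3 * (2 * k + 5) - 2 = 6 * k + 13 := by omega
  have h2 : 3 * (2 * k + 5) - 1 = 6 * k + 14 := by omega
  rw [h1, h2]; ring

/-- Every integer larger than `F(T)` lies in `T`. -/
lemma mem_T (k t : ℕ) (ht : FT (2 * k + 5) < t) : t ∈ Tset (2 * k + 5) := by
  rw [FT_eq] at ht
  obtain ⟨r, K, hr, hK⟩ : ∃ r K : ℕ, r < 2 * k + 5 ∧ t + r = (2 * k + 5) * K := by
    have h1 := Nat.div_add_mod (t + (2 * k + 4)) (2 * k + 5)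
    have h2 := Nat.mod_lt (t + (2 * k + 4)) (show 0 < 2 * k + 5 by omega)
    exact ⟨2 * k + 4 - (t + (2 * k + 4)) % (2 * k + 5), (t + (2 * k + 4)) / (2 * k + 5),
      by omega, by omega⟩
  have hle : 3 * (r / 2) + 3 * (r % 2) ≤ K := by
    by_cases hr' : r ≤ 2 * k + 2
    · have : 3 * k + 4 < K := by
        by_contra hc
        have := Nat.mul_le_mul_left (2 * k + 5) (not_lt.mp hc)
        omega
      omega
    · have : 3 * k + 5 < K := by
        by_contra hc
        have := Nat.mul_le_mul_left (2 * k + 5) (not_lt.mp hc)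
        have e : (2 * k + 5) * (3 * k + 5) = (2 * k + 5) * (3 * k + 4) + (2 * k + 5) := by ring
        omega
      omega
  refine ⟨K - (3 * (r / 2) + 3 * (r % 2)), r / 2, r % 2, ?_⟩
  have h := phi_eq k (K - (3 * (r / 2) + 3 * (r % 2))) (r / 2) (r % 2)
  have e : K - (3 * (r / 2) + 3 * (r % 2)) + 3 * (r / 2) + 3 * (r % 2) = K := by omega
  rw [e, ← hK] at h
  omega

lemma Ap_le (k s : ℕ) (hs : s ∈ Ap (2 * k + 5)) : s ≤ 2 * FT (2 * k + 5) := by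
  by_contra hc
  exact hs.2 ⟨s - FT (2 * k + 5), Or.inl (mem_T k _ (by omega)), by omega⟩

lemma bounds (k s x y z : ℕ) (hs : s ≤ 2 * FT (2 * k + 5))
    (h : (2 * k + 5) * (x + 3 * y + 3 * z) = s + (2 * y + z)) :
    2 * y + z < 4 * k + 8 ∧ y + z < 2 * k + 4 := by
  rw [FT_eq] at hs
  have hw : 2 * y + z < 4 * k + 8 := by
    by_contra hc
    push Not at hc
    nlinarith [Nat.zero_le ((2 * k + 5) * x), Nat.zero_le ((2 * k + 5) * z),
      Nat.mul_le_mul_left (6 * k + 13) hc]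
  refine ⟨hw, ?_⟩
  by_contra hc
  push Not at hc
  nlinarith [Nat.zero_le ((2 * k + 5) * x), Nat.mul_le_mul_left (2 * k + 5) hc]

/-- Injection of the factorizations into `{0, …, (n-1)/2 - 1}`. -/
def gmap (k : ℕ) (p : ℕ × ℕ × ℕ) : ℕ :=
  if 2 * p.2.1 + p.2.2 < 2 * k + 4 then p.2.1
  else if 2 * p.2.1 + p.2.2 = 2 * k + 4 then p.2.1 - 1
  else p.2.1 + p.2.2 - (k + 2)

lemma same_or (k s N M v w : ℕ) (h1 : (2 * k + 5) * N = s + v) (h2 : (2 * k + 5) * M = s + w)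
    (hv : v < 4 * k + 8) (hw : w < 4 * k + 8) :
    (N = M ∧ v = w) ∨ w = v + (2 * k + 5) ∨ v = w + (2 * k + 5) := by
  rcases lt_trichotomy N M with h | h | h
  · obtain ⟨d, rfl⟩ := Nat.exists_eq_add_of_lt h
    rcases d with _ | d
    · right; left; nlinarith
    · exfalso; nlinarith [Nat.zero_le ((2 * k + 5) * d)]
  · left; subst h; omega
  · obtain ⟨d, rfl⟩ := Nat.exists_eq_add_of_lt h
    rcases d with _ | d
    · right; right; nlinarith
    · exfalso; nlinarith [Nat.zero_le ((2 * k + 5) * d)]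

lemma count_le (k s : ℕ) (hs : s ≤ 2 * FT (2 * k + 5)) :
    (Zfac (2 * k + 5) s).ncard ≤ k + 2 := by
  have key : ∀ p ∈ Zfac (2 * k + 5) s,
      (2 * k + 5) * (p.1 + 3 * p.2.1 + 3 * p.2.2) = s + (2 * p.2.1 + p.2.2) := by
    rintro ⟨x, y, z⟩ hp
    have := phi_eq k x y z
    simp only [Zfac, phi, Set.mem_setOf_eq] at hp
    simp only
    omega
  have hcard : (Set.Iio (k + 2)).ncard = k + 2 := by
    rw [← Finset.coe_Iio, Set.ncard_coe_finset, Nat.card_Iio]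
  rw [← hcard]
  refine Set.ncard_le_ncard_of_injOn (gmap k) ?_ ?_ (Set.finite_Iio _)
  · rintro ⟨x, y, z⟩ hp
    have h := key _ hp
    obtain ⟨h1, h2⟩ := bounds k s x y z hs h
    simp only [gmap, Set.mem_Iio]
    split_ifs <;> omega
  · rintro ⟨x, y, z⟩ hp ⟨x', y', z'⟩ hq hg
    have h := key _ hp
    have h' := key _ hq
    obtain ⟨h1, h2⟩ := bounds k s x y z hs h
    obtain ⟨h1', h2'⟩ := bounds k s x' y' z' hs h'
    have hc := same_or k s _ _ _ _ h h' h1 h1'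
    simp only [gmap] at hg hc
    clear h h' key
    have : x = x' ∧ y = y' ∧ z = z' := by
      split_ifs at hg <;> omega
    simp [this]

/-- For every `i ≥ (n+1)/2`, no element of the Apéry set has exactly `i`
factorizations: `M_i = ∅`. -/
theorem stmt10 (n : ℕ) (hodd : Odd n) (hn : 5 ≤ n) :
    ∀ i : ℕ, (n + 1) / 2 ≤ i → Mset n i = ∅ := by
  intro i hi
  obtain ⟨m, rfl⟩ := hodd
  obtain ⟨k, rfl⟩ : ∃ k, m = k + 2 := ⟨m - 2, by omega⟩
  have e : 2 * (k + 2) + 1 = 2 * k + 5 := by ring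
  rw [e] at hi ⊢
  refine Set.eq_empty_of_forall_notMem ?_
  rintro s ⟨hs, hc⟩
  have := count_le k s (Ap_le k s hs)
  omega
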